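/- Let M be a matching of maximum weight among all matchings of size n/3 in G. Then there exists a set N of edges of G such that: every edge of N either has both endpoints in V(M) lying in two distinct edges of M, or has exactly one endpoint in V(M); no edge of M contains an endpoint of more than one edge of N; no two edges of N share a vertex outside V(M); and c(N) ≥ (1/4)·c(E_1) + (1/2)·c(E_2) + c(E_3). -/

import Mathlib

open Finset
open scoped Classical

namespace MW3PP

/-- A 3-path `xyz`: a path on three distinct vertices with middle vertex `y`. -/
structure P3 (V : Type*) where
  x : V
  y : V
  z : V
  hxy : x ≠ y
  hyz : y ≠ z
  hxz : x ≠ z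

variable {V : Type*} [Fintype V] [DecidableEq V]

/-- The vertex set of a 3-path. -/
def P3.verts (p : P3 V) : Finset V := {p.x, p.y, p.z}

/-- The two edges of a 3-path. -/
def P3.edges (p : P3 V) : Finset (Sym2 V) := {s(p.x, p.y), s(p.y, p.z)}

/-- The weight of a 3-path. -/
def P3.wt (w : Sym2 V → ℝ) (p : P3 V) : ℝ := w s(p.x, p.y) + w s(p.y, p.z)

/-- The total weight of a set of edges. -/
def ew (w : Sym2 V → ℝ) (F : Finset (Sym2 V)) : ℝ := ∑ e ∈ F, w e

/-- The total weight of a set of 3-paths. -/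
def pw (w : Sym2 V → ℝ) (P : Finset (P3 V)) : ℝ := ∑ p ∈ P, p.wt w

/-- `∑_{xyz ∈ S} max (w (xy)) (w (yz))`. -/
def maxSum (w : Sym2 V → ℝ) (S : Finset (P3 V)) : ℝ :=
  ∑ p ∈ S, max (w s(p.x, p.y)) (w s(p.y, p.z))

/-- A perfect 3-path packing: `n/3` pairwise vertex-disjoint 3-paths covering all vertices. -/
def IsPacking (P : Finset (P3 V)) : Prop :=
  P.card = Fintype.card V / 3 ∧
  (∀ p ∈ P, ∀ q ∈ P, p ≠ q → Disjoint p.verts q.verts) ∧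
  (∀ v : V, ∃ p ∈ P, v ∈ p.verts)

/-- A maximum-weight perfect 3-path packing. -/
def IsMaxPacking (w : Sym2 V → ℝ) (P : Finset (P3 V)) : Prop :=
  IsPacking P ∧ ∀ Q : Finset (P3 V), IsPacking Q → pw w Q ≤ pw w P

/-- A matching: a set of pairwise vertex-disjoint (non-loop) edges. -/
def IsMatching (M : Finset (Sym2 V)) : Prop :=
  (∀ e ∈ M, ¬ e.IsDiag) ∧
  ∀ e ∈ M, ∀ f ∈ M, e ≠ f → ∀ v : V, v ∈ e → v ∉ f

/-- A maximum-weight matching among all matchings of size `k`. -/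
def IsMaxMatchingOfSize (w : Sym2 V → ℝ) (k : ℕ) (M : Finset (Sym2 V)) : Prop :=
  IsMatching M ∧ M.card = k ∧
  ∀ M' : Finset (Sym2 V), IsMatching M' → M'.card = k → ew w M' ≤ ew w M

/-- `v ∈ V(M)` : vertex `v` is covered by the matching `M`. -/
def covered (M : Finset (Sym2 V)) (v : V) : Prop := ∃ e ∈ M, v ∈ e

/-- `e_u` : the edge of `M` containing `u` (junk value if there is none). -/
noncomputable def eMatch (M : Finset (Sym2 V)) (u : V) : Sym2 V :=
  if h : ∃ e ∈ M, u ∈ e then h.choose else s(u, u)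

/-- The cost `c` of an edge with respect to a matching `M`:
`c(uv) = w(uv) - min (w (e_u)) (w (e_v))` if both endpoints are covered by `M`,
and `c(uv) = w(uv)` otherwise. -/
noncomputable def cost (w : Sym2 V → ℝ) (M : Finset (Sym2 V)) : Sym2 V → ℝ :=
  Sym2.lift ⟨fun u v =>
    if covered M u ∧ covered M v then
      w s(u, v) - min (w (eMatch M u)) (w (eMatch M v))
    else w s(u, v), by
      intro u v
      dsimp only
      by_cases h : covered M u ∧ covered M v
      · rw [if_pos h, if_pos (show covered M v ∧ covered M u from ⟨h.2, h.1⟩),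
          Sym2.eq_swap, min_comm]
      · rw [if_neg h, if_neg (show ¬(covered M v ∧ covered M u) from fun h' => h ⟨h'.2, h'.1⟩),
          Sym2.eq_swap]⟩

/-- The total cost of a set of edges. -/
noncomputable def cw (w : Sym2 V → ℝ) (M F : Finset (Sym2 V)) : ℝ := ∑ e ∈ F, cost w M e

/-- The number of vertices of the 3-path `p` covered by `M`. -/
noncomputable def kcnt (M : Finset (Sym2 V)) (p : P3 V) : ℕ :=
  (p.verts.filter fun v => covered M v).card

/-- Exactly one of the two edges of `p` lies in `M`. -/
def exOne (M : Finset (Sym2 V)) (p : P3 V) : Prop :=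
  (s(p.x, p.y) ∈ M ∧ s(p.y, p.z) ∉ M) ∨ (s(p.x, p.y) ∉ M ∧ s(p.y, p.z) ∈ M)

def cls1 (M : Finset (Sym2 V)) (p : P3 V) : Prop := kcnt M p = 0
def cls2 (M : Finset (Sym2 V)) (p : P3 V) : Prop := kcnt M p = 1 ∧ ¬ covered M p.y
def cls3 (M : Finset (Sym2 V)) (p : P3 V) : Prop := kcnt M p = 1 ∧ covered M p.y
def cls4 (M : Finset (Sym2 V)) (p : P3 V) : Prop := kcnt M p = 2 ∧ ¬ covered M p.y
def cls5 (M : Finset (Sym2 V)) (p : P3 V) : Prop := kcnt M p = 2 ∧ covered M p.y ∧ exOne M p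
def cls6 (M : Finset (Sym2 V)) (p : P3 V) : Prop :=
  kcnt M p = 2 ∧ covered M p.y ∧ s(p.x, p.y) ∉ M ∧ s(p.y, p.z) ∉ M
def cls7 (M : Finset (Sym2 V)) (p : P3 V) : Prop := kcnt M p = 3 ∧ exOne M p
def cls8 (M : Finset (Sym2 V)) (p : P3 V) : Prop :=
  kcnt M p = 3 ∧ s(p.x, p.y) ∉ M ∧ s(p.y, p.z) ∉ M

/-- The subset of a set of 3-paths satisfying a predicate. -/
noncomputable def psel (P : Finset (P3 V)) (c : P3 V → Prop) : Finset (P3 V) := P.filter c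

/-- The set of all edges of the 3-paths in `S`. -/
def Esub (S : Finset (P3 V)) : Finset (Sym2 V) := S.biUnion P3.edges

/-- The heaviest edge of a 3-path (the edge `xy` in case of a tie). -/
noncomputable def heavy (w : Sym2 V → ℝ) (p : P3 V) : Sym2 V :=
  if w s(p.y, p.z) ≤ w s(p.x, p.y) then s(p.x, p.y) else s(p.y, p.z)

noncomputable def X1 (w : Sym2 V → ℝ) (P : Finset (P3 V)) (M : Finset (Sym2 V)) :
    Finset (Sym2 V) := (psel P (cls1 M)).image (heavy w)
noncomputable def X2 (P : Finset (P3 V)) (M : Finset (Sym2 V)) : Finset (Sym2 V) :=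
  (psel P (cls2 M)).image fun p => if covered M p.x then s(p.x, p.y) else s(p.y, p.z)
noncomputable def X3 (w : Sym2 V → ℝ) (P : Finset (P3 V)) (M : Finset (Sym2 V)) :
    Finset (Sym2 V) := (psel P (cls3 M)).image (heavy w)
noncomputable def X4 (w : Sym2 V → ℝ) (P : Finset (P3 V)) (M : Finset (Sym2 V)) :
    Finset (Sym2 V) := (psel P (cls4 M)).image (heavy w)
noncomputable def X5 (P : Finset (P3 V)) (M : Finset (Sym2 V)) : Finset (Sym2 V) :=
  (psel P (cls5 M)).image fun p => if s(p.x, p.y) ∈ M then s(p.y, p.z) else s(p.x, p.y)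
noncomputable def X6 (P : Finset (P3 V)) (M : Finset (Sym2 V)) : Finset (Sym2 V) :=
  (psel P (cls6 M)).image fun p => if covered M p.x then s(p.y, p.z) else s(p.x, p.y)
noncomputable def X7 (P : Finset (P3 V)) (M : Finset (Sym2 V)) : Finset (Sym2 V) :=
  (psel P (cls7 M)).image fun p => if s(p.x, p.y) ∈ M then s(p.y, p.z) else s(p.x, p.y)
noncomputable def X8 (w : Sym2 V → ℝ) (P : Finset (P3 V)) (M : Finset (Sym2 V)) :
    Finset (Sym2 V) := (psel P (cls8 M)).image (heavy w)

noncomputable def Y1 (w : Sym2 V → ℝ) (P : Finset (P3 V)) (M : Finset (Sym2 V)) :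
    Finset (Sym2 V) := Esub (psel P (cls1 M)) \ X1 w P M
noncomputable def Y2 (P : Finset (P3 V)) (M : Finset (Sym2 V)) : Finset (Sym2 V) :=
  Esub (psel P (cls2 M)) \ X2 P M
noncomputable def Y3 (w : Sym2 V → ℝ) (P : Finset (P3 V)) (M : Finset (Sym2 V)) :
    Finset (Sym2 V) := Esub (psel P (cls3 M)) \ X3 w P M
noncomputable def Y4 (w : Sym2 V → ℝ) (P : Finset (P3 V)) (M : Finset (Sym2 V)) :
    Finset (Sym2 V) := Esub (psel P (cls4 M)) \ X4 w P M
noncomputable def Y5 (P : Finset (P3 V)) (M : Finset (Sym2 V)) : Finset (Sym2 V) :=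
  Esub (psel P (cls5 M)) \ X5 P M
noncomputable def Y6 (P : Finset (P3 V)) (M : Finset (Sym2 V)) : Finset (Sym2 V) :=
  Esub (psel P (cls6 M)) \ X6 P M
noncomputable def Y7 (P : Finset (P3 V)) (M : Finset (Sym2 V)) : Finset (Sym2 V) :=
  Esub (psel P (cls7 M)) \ X7 P M
noncomputable def Y8 (w : Sym2 V → ℝ) (P : Finset (P3 V)) (M : Finset (Sym2 V)) :
    Finset (Sym2 V) := Esub (psel P (cls8 M)) \ X8 w P M

/-- An edge is a middle edge (w.r.t. `M`) if exactly one of its endpoints lies in `V(M)`. -/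
def isMiddle (M : Finset (Sym2 V)) (e : Sym2 V) : Prop :=
  ∃ u v : V, e = s(u, v) ∧ covered M u ∧ ¬ covered M v

/-- Two edges share a vertex. -/
def shares (e f : Sym2 V) : Prop := ∃ v, v ∈ e ∧ v ∈ f

/-- `g` is a middle edge of some 3-path in `S`. -/
def middleIn (M : Finset (Sym2 V)) (S : Finset (P3 V)) (g : Sym2 V) : Prop :=
  (∃ p ∈ S, g ∈ p.edges) ∧ isMiddle M g

/-- The 3-paths of `P` lying in classes 2, 3 or 4. -/
noncomputable def P234 (P : Finset (P3 V)) (M : Finset (Sym2 V)) : Finset (P3 V) :=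
  psel P fun p => cls2 M p ∨ cls3 M p ∨ cls4 M p

/-- `M_1`: edges of `M` sharing a vertex with at least one middle edge of a 3-path of `P*_6`. -/
noncomputable def Mset1 (P : Finset (P3 V)) (M : Finset (Sym2 V)) : Finset (Sym2 V) :=
  M.filter fun f => ∃ g, middleIn M (psel P (cls6 M)) g ∧ shares f g

/-- `M_2`: edges of `M` sharing a vertex with at least one middle edge, all middle edges met
belonging to 3-paths of `P*_2 ∪ P*_3 ∪ P*_4`. -/
noncomputable def Mset2 (P : Finset (P3 V)) (M : Finset (Sym2 V)) : Finset (Sym2 V) :=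
  M.filter fun f =>
    (∃ g, middleIn M P g ∧ shares f g) ∧
    ∀ g, middleIn M P g → shares f g → middleIn M (P234 P M) g

/-- `M_3 = M ∩ E(P*_7)`. -/
noncomputable def Mset3 (P : Finset (P3 V)) (M : Finset (Sym2 V)) : Finset (Sym2 V) :=
  M ∩ Esub (psel P (cls7 M))

/-- `M_4 = M ∩ E(P*_5)`. -/
noncomputable def Mset4 (P : Finset (P3 V)) (M : Finset (Sym2 V)) : Finset (Sym2 V) :=
  M ∩ Esub (psel P (cls5 M))

/-- The middle edges of 3-paths of `P*_6`. -/
noncomputable def mid6 (P : Finset (P3 V)) (M : Finset (Sym2 V)) : Finset (Sym2 V) :=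
  (Esub (psel P (cls6 M))).filter (isMiddle M)

/-- `M'_1`: edges of `M_1` meeting exactly one middle edge of a 3-path of `P*_6` and
no middle edge of a 3-path of `P*_2 ∪ P*_3 ∪ P*_4`. -/
noncomputable def Mset1' (P : Finset (P3 V)) (M : Finset (Sym2 V)) : Finset (Sym2 V) :=
  (Mset1 P M).filter fun f =>
    ((mid6 P M).filter fun g => shares f g).card = 1 ∧
    ∀ g, middleIn M (P234 P M) g → ¬ shares f g

/-- `M''_1`: edges of `M_1` meeting two middle edges of 3-paths of `P*_6`. -/
noncomputable def Mset1'' (P : Finset (P3 V)) (M : Finset (Sym2 V)) : Finset (Sym2 V) :=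
  (Mset1 P M).filter fun f => ((mid6 P M).filter fun g => shares f g).card = 2

/-- `M'''_1`: edges of `M_1` meeting exactly one middle edge of a 3-path of `P*_6` and
at least one middle edge of a 3-path of `P*_2 ∪ P*_3 ∪ P*_4`. -/
noncomputable def Mset1''' (P : Finset (P3 V)) (M : Finset (Sym2 V)) : Finset (Sym2 V) :=
  (Mset1 P M).filter fun f =>
    ((mid6 P M).filter fun g => shares f g).card = 1 ∧
    ∃ g, middleIn M (P234 P M) g ∧ shares f g

/-- Assumption on `P*`: for every 3-path `xyz ∈ P*` with `y ∉ V(M)` and `x, z ∈ V(M)`,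
the vertices `x` and `z` lie in two distinct edges of `M`. -/
def Ass (P : Finset (P3 V)) (M : Finset (Sym2 V)) : Prop :=
  ∀ p ∈ P, ¬ covered M p.y → covered M p.x → covered M p.z →
    ∃ e ∈ M, ∃ f ∈ M, p.x ∈ e ∧ p.z ∈ f ∧ e ≠ f

/-- An admissible edge w.r.t. `M`: either both endpoints are in `V(M)` and lie in two distinct
edges of `M`, or exactly one endpoint is in `V(M)`. -/
def goodEdge (M : Finset (Sym2 V)) (e : Sym2 V) : Prop :=
  (∃ u v : V, e = s(u, v) ∧ covered M u ∧ covered M v ∧ ∀ f ∈ M, ¬(u ∈ f ∧ v ∈ f)) ∨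
  (∃ u v : V, e = s(u, v) ∧ covered M u ∧ ¬ covered M v)



/-- Greedy list colouring with a symmetric incompatibility relation. -/
theorem exists_greedy_coloring {X C : Type*} [Nonempty C] (s : Finset X)
    (allowed : X → C → Prop) (bad : X → X → C → C → Prop)
    (bad_symm : ∀ x y a b, bad x y a b → bad y x b a)
    (h : ∀ x ∈ s, ∀ f : X → C, ∃ c, allowed x c ∧ ∀ y ∈ s, y ≠ x → ¬ bad x y c (f y)) :
    ∃ f : X → C, ∀ x ∈ s, allowed x (f x) ∧ ∀ y ∈ s, y ≠ x → ¬ bad x y (f x) (f y) := by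
  suffices H : ∀ t : Finset X, t ⊆ s → ∃ f : X → C,
      ∀ x ∈ t, allowed x (f x) ∧ ∀ y ∈ t, y ≠ x → ¬ bad x y (f x) (f y) from H s subset_rfl
  intro t
  induction t using Finset.induction_on with
  | empty => exact fun _ => ⟨fun _ => Classical.arbitrary C, by simp⟩
  | insert a t ha ih =>
    intro hs
    obtain ⟨f, hf⟩ := ih fun x hx => hs (mem_insert_of_mem hx)
    obtain ⟨c, hc, hc'⟩ := h a (hs (mem_insert_self a t)) f
    refine ⟨Function.update f a c, fun x hx => ?_⟩
    rcases mem_insert.1 hx with rfl | hxt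
    · refine ⟨by simpa using hc, fun y hy hyx => ?_⟩
      have hyt : y ∈ t := (mem_insert.1 hy).resolve_left hyx
      simpa [hyx] using hc' y (hs hy) hyx
    · have hxa : x ≠ a := fun e => ha (e ▸ hxt)
      refine ⟨by simpa [hxa] using (hf x hxt).1, fun y hy hyx => ?_⟩
      rcases mem_insert.1 hy with hya | hy
      · subst hya
        simpa [hxa] using fun hb => hc' x (hs (mem_insert_of_mem hxt)) hxa (bad_symm _ _ _ _ hb)
      · have hya : y ≠ a := fun e => ha (e ▸ hy)
        simpa [hxa, hya] using (hf x hxt).2 y hy hyx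

/-- A two-colouring that is proper for an involution away from a bichromatic pair `x`, `y` can be
repaired by exchanging the colours of `x` and `y`. -/
theorem exists_recoloring_pair {X : Type*} {σ : X → X} (hσ : Function.Involutive σ) {x y : X}
    (hyx : y ≠ x) (hsx : σ x ≠ y) (c : X → Bool) (hxy : c y ≠ c x)
    (hout : ∀ z, z ≠ x → z ≠ y → σ z ≠ x → σ z ≠ y → σ z ≠ z → c (σ z) ≠ c z)
    (hcross : σ x ≠ x → σ y ≠ y → c (σ x) ≠ c (σ y)) :
    ∃ d : X → Bool, (∀ z, z ≠ x → z ≠ y → d z = c z) ∧ d y ≠ d x ∧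
      ∀ z, σ z ≠ z → d (σ z) ≠ d z := by
  have hsy : σ y ≠ x := fun e => hsx (by rw [← e, hσ y])
  obtain ⟨d, hd, hdxy, hdx, hdy⟩ : ∃ d : X → Bool, (∀ z, z ≠ x → z ≠ y → d z = c z) ∧ d y ≠ d x ∧
      (σ x ≠ x → d (σ x) ≠ d x) ∧ (σ y ≠ y → d (σ y) ≠ d y) := by
    by_cases hflip : (σ x ≠ x ∧ c (σ x) = c x) ∨ (σ y ≠ y ∧ c (σ y) = c y)
    · refine ⟨fun z => if z = x then c y else if z = y then c x else c z, ?_⟩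
      grind
    · exact ⟨c, by grind⟩
  refine ⟨d, hd, hdxy, fun z hz => ?_⟩
  have hz' := hσ z
  by_cases hzx : z = x
  · subst hzx; exact hdx hz
  by_cases hzy : z = y
  · subst hzy; exact hdy hz
  by_cases hszx : σ z = x
  · rw [hszx] at hz' hz ⊢
    rw [← hz']
    exact (hdx (by rw [hz']; exact hzx)).symm
  by_cases hszy : σ z = y
  · rw [hszy] at hz' hz ⊢
    rw [← hz']
    exact (hdy (by rw [hz']; exact hzy)).symm
  rw [hd z hzx hzy, hd _ hszx hszy]
  exact hout z hzx hzy hszx hszy hz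

/-- An involution can be modified so as to exchange two given points `x`, `y` as well as their
former partners. -/
theorem exists_rematching {X : Type*} {σ : X → X} (hσ : Function.Involutive σ) {x y : X}
    (hyx : y ≠ x) :
    ∃ σ' : X → X, Function.Involutive σ' ∧ σ' x = y ∧ σ' y = x ∧
      (∀ z, z ≠ x → z ≠ y → σ z ≠ x → σ z ≠ y → σ' z = σ z) ∧
      (σ x ≠ x → σ y ≠ y → σ' (σ x) = σ y) := by
  have hx := hσ x
  have hy := hσ y
  refine ⟨fun z => if z = x then y else if z = y then x else
    if z = σ x then (if σ y = y then z else σ y) else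
    if z = σ y then (if σ x = x then z else σ x) else σ z, fun z => ?_, ?_, ?_, ?_, ?_⟩
  · have hz := hσ z
    grind
  all_goals grind

/-- The union of two partial matchings, given as involutions, is bipartite. -/
theorem exists_bicoloring_of_involutive {X : Type*} [Finite X] (σ τ : X → X)
    (hσ : Function.Involutive σ) (hτ : Function.Involutive τ) :
    ∃ c : X → Bool, (∀ x, σ x ≠ x → c (σ x) ≠ c x) ∧ ∀ x, τ x ≠ x → c (τ x) ≠ c x := by
  have := Fintype.ofFinite X
  induction hn : (univ.filter fun x => τ x ≠ x).card using Nat.strong_induction_on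
    generalizing σ τ with
  | _ n ih =>
  by_cases hfix : ∀ x, τ x = x
  · obtain ⟨c, hc⟩ := exists_greedy_coloring (C := Bool) (univ : Finset X) (fun _ _ => True)
      (fun x y a b => σ x = y ∧ a = b) (by grind [Function.Involutive]) (by
        intro x _ f
        exact ⟨!f (σ x), trivial, by grind⟩)
    exact ⟨c, fun x hx e => (hc x (mem_univ x)).2 (σ x) (mem_univ _) hx ⟨rfl, e.symm⟩,
      fun x hx => (hx (hfix x)).elim⟩
  push Not at hfix
  obtain ⟨x, hx⟩ := hfix
  obtain ⟨y, hy⟩ : ∃ y, y = τ x := ⟨_, rfl⟩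
  have hyx : y ≠ x := hy ▸ hx
  have hty : τ y = x := by rw [hy, hτ x]
  let τ' : X → X := fun z => if z = x ∨ z = y then z else τ z
  have hτ' : Function.Involutive τ' := by
    intro z; have := hτ z; grind
  have hlt : (univ.filter fun x => τ' x ≠ x).card < n := by
    rw [← hn]
    apply card_lt_card
    refine (ssubset_iff_of_subset fun z => ?_).2 ⟨x, ?_⟩
    · simp only [mem_filter, mem_univ, true_and]; grind
    · simp only [mem_filter, mem_univ, true_and]; grind
  obtain ⟨σ', hσ', hσx, hσy, hout, hcross⟩ := exists_rematching hσ hyx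
  obtain ⟨c, hc, hc'⟩ := ih _ hlt σ' τ' hσ' hτ' rfl
  have hxy : c y ≠ c x := by rw [← hσx]; exact hc x (hσx ▸ hyx)
  obtain ⟨d, hd, hdxy, hdσ⟩ : ∃ d : X → Bool, (∀ z, z ≠ x → z ≠ y → d z = c z) ∧ d y ≠ d x ∧
      ∀ z, σ z ≠ z → d (σ z) ≠ d z := by
    by_cases hsx : σ x = y
    · refine ⟨c, fun _ _ _ => rfl, hxy, fun z hz => ?_⟩
      have hsy : σ y = x := by rw [← hsx, hσ x]
      by_cases hzx : z = x
      · rw [hzx, hsx]; exact hxy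
      by_cases hzy : z = y
      · rw [hzy, hsy]; exact hxy.symm
      have hσz := hout z hzx hzy (fun e => hzy (by rw [← hσ z, e, hsx]))
        (fun e => hzx (by rw [← hσ z, e, hsy]))
      rw [← hσz]
      exact hc z (hσz ▸ hz)
    · refine exists_recoloring_pair hσ hyx hsx c hxy (fun z hzx hzy hszx hszy hz => ?_)
        fun hx' hy' => ?_
      · have hσz := hout z hzx hzy hszx hszy
        rw [← hσz]
        exact hc z (hσz ▸ hz)
      · have h1 := hcross hx' hy'
        have h2 : σ y ≠ σ x := fun e => hyx (hσ.injective e)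
        rw [← h1] at h2 ⊢
        exact (hc _ h2).symm
  refine ⟨d, hdσ, fun z hz => ?_⟩
  by_cases hzx : z = x
  · rw [hzx, ← hy]; exact hdxy
  by_cases hzy : z = y
  · rw [hzy, hty]; exact hdxy.symm
  have h1 := hτ z
  have h2 := hc' z
  rw [hd z hzx hzy, hd (τ z) (by grind) (by grind)]
  grind

/-- The colouring `col` gives distinct colours to conflicting half-edges `(p, b)`, `p ∈ s`, where
`p` is a path with middle `mid p` and ends `en p false`, `en p true`, and vertices are identified
along an involution `m`. -/
def IsProperOn {ι W : Type*} (mid : ι → W) (en : ι → Bool → W) (m : W → W) (s : Set ι)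
    (col : ι → Bool → Bool × Bool) : Prop :=
  (∀ p ∈ s, col p false ≠ col p true) ∧
  (∀ p ∈ s, ∀ q ∈ s, p ≠ q → m (mid p) = mid q → ∀ b b', col p b ≠ col q b') ∧
  (∀ p ∈ s, ∀ q ∈ s, ∀ b', m (mid p) = en q b' → ∀ b, col p b ≠ col q b') ∧
  (∀ p ∈ s, ∀ q ∈ s, p ≠ q → ∀ b b', m (en p b) = en q b' → col p b ≠ col q b')

section Coloring

variable {ι W : Type*} {mid : ι → W} {en : ι → Bool → W} {m : W → W}

theorem exists_isProperOn_of_mid_paired [Finite ι] (hm : Function.Involutive m)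
    (hmid : Function.Injective mid) (hen : Function.Injective (fun h : ι × Bool => en h.1 h.2))
    (hme : ∀ p q b, mid p ≠ en q b) :
    ∃ col, IsProperOn mid en m {p | ∃ q, m (mid p) = mid q} col := by
  obtain ⟨σ, hσ⟩ : ∃ σ : ι × Bool → ι × Bool, ∀ h,
      (∀ h' : ι × Bool, m (en h.1 h.2) = en h'.1 h'.2 →
      σ h = h') ∧ ((∀ h' : ι × Bool, m (en h.1 h.2) ≠ en h'.1 h'.2) → σ h = h) := by
    refine ⟨fun h => if e : ∃ h' : ι × Bool, m (en h.1 h.2) = en h'.1 h'.2 then e.choose else h,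
      fun h => ⟨fun h' hh => ?_, fun hh => ?_⟩⟩
    · have e : ∃ h' : ι × Bool, m (en h.1 h.2) = en h'.1 h'.2 := ⟨h', hh⟩
      simp only [dif_pos e]
      exact hen (e.choose_spec.symm.trans hh)
    · exact dif_neg fun ⟨h', e⟩ => hh h' e
  obtain ⟨τ, hτ⟩ : ∃ τ : ι → ι, ∀ p, (∀ q, m (mid p) = mid q → τ p = q) ∧
      ((∀ q, m (mid p) ≠ mid q) → τ p = p) := by
    refine ⟨fun p => if e : ∃ q, m (mid p) = mid q then e.choose else p,
      fun p => ⟨fun q hh => ?_, fun hh => ?_⟩⟩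
    · have e : ∃ q, m (mid p) = mid q := ⟨q, hh⟩
      simp only [dif_pos e]
      exact hmid (e.choose_spec.symm.trans hh)
    · exact dif_neg fun ⟨q, e⟩ => hh q e
  have hσi : Function.Involutive σ := fun h => by
    by_cases e : ∃ h' : ι × Bool, m (en h.1 h.2) = en h'.1 h'.2
    · obtain ⟨h', e⟩ := e
      rw [(hσ h).1 h' e]
      exact (hσ h').1 h (by rw [← e, hm])
    · push Not at e
      rw [(hσ h).2 e, (hσ h).2 e]
  have hτi : Function.Involutive τ := fun p => by
    by_cases e : ∃ q, m (mid p) = mid q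
    · obtain ⟨q, e⟩ := e
      rw [(hτ p).1 q e]
      exact (hτ q).1 p (by rw [← e, hm])
    · push Not at e
      rw [(hτ p).2 e, (hτ p).2 e]
  obtain ⟨c, hcσ, hcτ⟩ := exists_bicoloring_of_involutive σ (fun h => (τ h.1, h.2)) hσi
    (fun h => by simp [hτi h.1])
  refine ⟨fun p b => (b, c (p, b)), fun p _ => by simp, fun p _ q _ hpq h b b' e => ?_,
    fun p hp q _ b' h b => ?_, fun p _ q _ hpq b b' h e => ?_⟩
  · obtain ⟨rfl, e⟩ := Prod.mk.inj e
    have := hcτ (p, b)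
    simp only [(hτ p).1 q h] at this
    exact this (fun e => hpq (Prod.mk.inj e).1.symm) e.symm
  · obtain ⟨q', hq'⟩ := hp
    exact (hme q' q b' (hq'.symm.trans h)).elim
  · have := hcσ (p, b)
    rw [(hσ (p, b)).1 (q, b') h] at this
    exact this (fun e => hpq (Prod.mk.inj e).1.symm) (Prod.mk.inj e).2.symm

/-- Extending a proper colouring by a path none of whose ends is matched to a coloured middle. -/
theorem IsProperOn.exists_insert (hm : Function.Involutive m)
    (hen : Function.Injective (fun h : ι × Bool => en h.1 h.2))
    (hne : ∀ p b, m (mid p) ≠ en p b) {s : Set ι} {col : ι → Bool → Bool × Bool}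
    (h : IsProperOn mid en m s col) {p : ι} (hp : p ∉ s)
    (hpm : ∀ q ∈ s, m (mid p) ≠ mid q) (hpe : ∀ q ∈ s, ∀ b, m (mid q) ≠ en p b) :
    ∃ col', IsProperOn mid en m (insert p s) col' := by
  obtain ⟨a, ha⟩ : ∃ a, ∀ q ∈ s, ∀ b, m (mid p) = en q b → col q b = a := by
    by_cases e : ∃ q ∈ s, ∃ b, m (mid p) = en q b
    · obtain ⟨q, -, b, e⟩ := e
      refine ⟨col q b, fun q' _ b' e' => ?_⟩
      obtain ⟨rfl, rfl⟩ := Prod.mk.inj (@hen (q', b') (q, b) (e'.symm.trans e))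
      rfl
    · exact ⟨default, fun q hq b h => (e ⟨q, hq, b, h⟩).elim⟩
  have hend : ∀ b, ∃ a, ∀ q ∈ s, ∀ b', m (en p b) = en q b' → col q b' = a := by
    intro b
    by_cases e : ∃ q ∈ s, ∃ b', m (en p b) = en q b'
    · obtain ⟨q, -, b', e⟩ := e
      refine ⟨col q b', fun q' _ b'' e' => ?_⟩
      obtain ⟨rfl, rfl⟩ := Prod.mk.inj (@hen (q', b'') (q, b') (e'.symm.trans e))
      rfl
    · exact ⟨default, fun q hq b' h => (e ⟨q, hq, b', h⟩).elim⟩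
  choose d hd using hend
  obtain ⟨f, hf, hfa, hfd⟩ : ∃ f : Bool → Bool × Bool, f false ≠ f true ∧ (∀ b, f b ≠ a) ∧
      ∀ b, f b ≠ d b := by
    have : ∀ a x y : Bool × Bool, ∃ u v : Bool × Bool, u ≠ v ∧ u ≠ a ∧ v ≠ a ∧ u ≠ x ∧ v ≠ y := by
      decide
    obtain ⟨u, v, h1, h2, h3, h4, h5⟩ := this a (d false) (d true)
    exact ⟨fun b => if b then v else u, by simpa using h1, by simp [h2, h3], by simp [h4, h5]⟩
  obtain ⟨h1, h2, h3, h4⟩ := h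
  have hs : ∀ q ∈ s, q ≠ p := fun q hq e => hp (e ▸ hq)
  have hcol : ∀ q ∈ s, Function.update col p f q = col q := fun q hq => by simp [hs q hq]
  have hcolp : Function.update col p f p = f := by simp
  refine ⟨Function.update col p f, ?_, ?_, ?_, ?_⟩
  · rintro q (rfl | hq)
    · rwa [hcolp]
    · rw [hcol q hq]; exact h1 q hq
  · rintro q (rfl | hq) r (rfl | hr) hqr e
    · exact (hqr rfl).elim
    · exact (hpm r hr e).elim
    · exact (hpm q hq (by rw [← e, hm])).elim
    · rw [hcol q hq, hcol r hr]; exact h2 q hq r hr hqr e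
  · rintro q (rfl | hq) r (rfl | hr) b' e b
    · exact (hne _ _ e).elim
    · rw [hcolp, hcol r hr, ha r hr b' e]; exact hfa b
    · exact (hpe q hq _ e).elim
    · rw [hcol q hq, hcol r hr]; exact h3 q hq r hr b' e b
  · rintro q (rfl | hq) r (rfl | hr) hqr b b' e
    · exact (hqr rfl).elim
    · rw [hcolp, hcol r hr, hd b r hr b' e]; exact hfd b
    · rw [hcolp, hcol q hq, hd b' q hq b (by rw [← e, hm])]; exact (hfd b').symm
    · rw [hcol q hq, hcol r hr]; exact h4 q hq r hr hqr b b' e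

/-- Extending a proper colouring by a set of paths each of which has an end matched to the middle
of another path of this set. -/
theorem IsProperOn.exists_union (hm : Function.Involutive m)
    (hen : Function.Injective (fun h : ι × Bool => en h.1 h.2))
    (hme : ∀ p q b, mid p ≠ en q b)
    (hne : ∀ p b, m (mid p) ≠ en p b) {s : Set ι} {col : ι → Bool → Bool × Bool}
    (h : IsProperOn mid en m s col) (t : Finset ι) (hst : ∀ p ∈ t, p ∉ s)
    (hs : ∀ p ∈ s, ∃ q, m (mid p) = mid q)
    (ht : ∀ p ∈ t, ∃ q ∈ t, ∃ b, m (mid q) = en p b) :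
    ∃ col', IsProperOn mid en m (s ∪ t) col' := by
  have ht' : ∀ p, ∃ x : ι × Bool, p ∈ t → x.1 ∈ t ∧ m (mid x.1) = en p x.2 := fun p => by
    by_cases hp : p ∈ t
    · obtain ⟨q, hq, b, e⟩ := ht p hp
      exact ⟨(q, b), fun _ => ⟨hq, e⟩⟩
    · exact ⟨(p, true), fun h => (hp h).elim⟩
  choose x hx using ht'
  let g : ι → ι := fun p => (x p).1
  let β : ι → Bool := fun p => (x p).2
  have hgt : ∀ p ∈ t, g p ∈ t := fun p hp => (hx p hp).1
  have hg : ∀ p ∈ t, m (mid (g p)) = en p (β p) := fun p hp => (hx p hp).2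
  have hginj : ∀ p ∈ t, ∀ q ∈ t, g p = g q → p = q := fun p hp q hq e => by
    have := hg p hp
    rw [e, hg q hq] at this
    exact (Prod.mk.inj (@hen (q, β q) (p, β p) this)).1.symm
  have hgsurj : ∀ p ∈ t, ∃ q ∈ t, g q = p :=
    fun p hp => by
      obtain ⟨q, hq, e⟩ := Finset.surj_on_of_inj_on_of_card_le (s := t) (t := t) (fun a _ => g a)
        hgt (fun a b ha hb e => hginj a ha b hb e) le_rfl p hp
      exact ⟨q, hq, e.symm⟩
  have hgne : ∀ p ∈ t, g p ≠ p := fun p hp e => hne p (β p) (by rw [← hg p hp, e])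
  have hC : ∀ x y z : Bool × Bool, ∃ c, c ≠ x ∧ c ≠ y ∧ c ≠ z := by decide
  obtain ⟨α, hα⟩ := exists_greedy_coloring (C := Bool × Bool) t (fun _ _ => True)
    (fun p q a b => (g p = q ∨ g q = p) ∧ a = b)
    (fun p q a b h => ⟨h.1.symm, h.2.symm⟩) (by
      intro p hp f
      obtain ⟨q, hq, e⟩ := hgsurj p hp
      obtain ⟨c, hc1, hc2, -⟩ := hC (f (g p)) (f q) (f q)
      refine ⟨c, trivial, fun r hr _ h => ?_⟩
      obtain ⟨h | h, h'⟩ := h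
      · exact hc1 (by rw [h', h])
      · exact hc2 (by rw [h', hginj r hr q hq (h.trans e.symm)]))
  have hαg : ∀ p ∈ t, α (g p) ≠ α p := fun p hp e =>
    (hα p hp).2 (g p) (hgt p hp) (hgne p hp) ⟨Or.inl rfl, e.symm⟩
  obtain ⟨γ, hγ⟩ := exists_greedy_coloring (C := Bool × Bool) t
    (fun p c => c ≠ α p ∧ (∀ q ∈ t, g q = p → c ≠ α q) ∧
      ∀ q ∈ s, ∀ b, m (en p (!β p)) = en q b → c ≠ col q b)
    (fun p q a b => m (en p (!β p)) = en q (!β q) ∧ a = b)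
    (fun p q a b h => ⟨by rw [← h.1, hm], h.2.symm⟩) (by
      intro p hp f
      obtain ⟨q, hq, e⟩ := hgsurj p hp
      have hfst : ∀ r b r' b', m (en p (!β p)) = en r b → m (en p (!β p)) = en r' b' →
          r = r' ∧ b = b' := fun r b r' b' e e' =>
        Prod.mk.inj (@hen (r, b) (r', b') (e.symm.trans e'))
      obtain ⟨d, hd, hd'⟩ : ∃ d, (∀ q ∈ s, ∀ b, m (en p (!β p)) = en q b → col q b = d) ∧
          ∀ q ∈ t, m (en p (!β p)) = en q (!β q) → f q = d := by
        by_cases e1 : ∃ q ∈ s, ∃ b, m (en p (!β p)) = en q b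
        · obtain ⟨r, hr, b, e1⟩ := e1
          refine ⟨col r b, fun r' _ b' e' => ?_, fun r' hr' e' => ?_⟩
          · obtain ⟨rfl, rfl⟩ := hfst _ _ _ _ e1 e'
            rfl
          · obtain ⟨rfl, -⟩ := hfst _ _ _ _ e1 e'
            exact (hst _ hr' hr).elim
        by_cases e2 : ∃ q ∈ t, m (en p (!β p)) = en q (!β q)
        · obtain ⟨r, hr, e2⟩ := e2
          refine ⟨f r, fun r' hr' b' e' => (e1 ⟨r', hr', b', e'⟩).elim, fun r' hr' e' => ?_⟩
          rw [(hfst _ _ _ _ e2 e').1]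
        · exact ⟨default, fun r' hr' b' e' => (e1 ⟨r', hr', b', e'⟩).elim,
            fun r' hr' e' => (e2 ⟨r', hr', e'⟩).elim⟩
      obtain ⟨c, hc1, hc2, hc3⟩ := hC (α p) (α q) d
      refine ⟨c, ⟨hc1, fun r hr h => ?_, fun r hr b h => ?_⟩, fun r hr _ h => ?_⟩
      · rwa [hginj r hr q hq (h.trans e.symm)]
      · rwa [hd r hr b h]
      · exact hc3 (by rw [h.2, hd' r hr h.1]))
  obtain ⟨h1, h2, h3, h4⟩ := h
  let col' : ι → Bool → Bool × Bool := fun p b =>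
    if p ∈ t then (if b = β p then α p else γ p) else col p b
  have hcols : ∀ p ∈ s, col' p = col p := fun p hp => by
    funext b; exact if_neg fun h => hst p h hp
  have hcolα : ∀ p ∈ t, col' p (β p) = α p := fun p hp => by simp [col', hp]
  have hcolγ : ∀ p ∈ t, ∀ b, b ≠ β p → col' p b = γ p := fun p hp b hb => by simp [col', hp, hb]
  have hnoroot : ∀ p ∈ t, ∀ q, m (mid p) ≠ mid q := fun p hp q e => by
    obtain ⟨r, hr, e'⟩ := hgsurj p hp
    have := hg r hr
    rw [e', e] at this
    exact hme _ _ _ this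
  have hβ : ∀ p ∈ t, ∀ q b, m (en p (β p)) ≠ en q b := fun p hp q b e => by
    rw [← hg p hp, hm] at e
    exact hme _ _ _ e
  have hβ' : ∀ p ∈ t, ∀ q b b', m (en p b) = en q b' → b = !β p := fun p hp q b b' e =>
    Bool.eq_not.2 fun hb => hβ p hp q b' (hb ▸ e)
  have hγs : ∀ p ∈ t, ∀ q ∈ s, ∀ b b', m (en p b) = en q b' → col' p b ≠ col' q b' :=
    fun p hp q hq b b' e => by
      obtain rfl := hβ' p hp q b b' e
      rw [hcolγ p hp _ (by simp), hcols q hq]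
      exact (hγ p hp).1.2.2 q hq b' e
  refine ⟨col', ?_, ?_, ?_, ?_⟩
  · rintro p (hp | hp)
    · rw [hcols p hp]; exact h1 p hp
    · have := (hγ p hp).1.1
      cases hb : β p
      · rw [← hb, hcolα p hp, hcolγ p hp true (by simp [hb])]; exact this.symm
      · rw [← hb, hcolα p hp, hcolγ p hp false (by simp [hb])]; exact this
  · rintro p (hp | hp) q (hq | hq) hpq e b b'
    · rw [hcols p hp, hcols q hq]; exact h2 p hp q hq hpq e b b'
    · exact (hnoroot q hq p (by rw [← e, hm])).elim
    · exact (hnoroot p hp q e).elim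
    · exact (hnoroot p hp q e).elim
  · rintro p (hp | hp) q hq b' e b
    · obtain ⟨r, hr⟩ := hs p hp
      exact (hme _ _ _ (hr.symm.trans e)).elim
    · obtain ⟨r, hr, e'⟩ := hgsurj p hp
      have hgr := hg r hr
      rw [e', e] at hgr
      obtain ⟨rfl, rfl⟩ := Prod.mk.inj (@hen (q, b') (r, β r) hgr)
      rw [hcolα q hr]
      by_cases hb : b = β p
      · rw [hb, hcolα p hp, ← e']; exact hαg q hr
      · rw [hcolγ p hp b hb]; exact (hγ p hp).1.2.1 q hr e'
  · rintro p (hp | hp) q (hq | hq) hpq b b' e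
    · rw [hcols p hp, hcols q hq]; exact h4 p hp q hq hpq b b' e
    · exact (hγs q hq p hp b' b (by rw [← e, hm])).symm
    · exact hγs p hp q hq b b' e
    · obtain rfl := hβ' p hp q b b' e
      obtain rfl := hβ' q hq p b' _ (by rw [← e, hm])
      rw [hcolγ p hp _ (by simp), hcolγ q hq _ (by simp)]
      exact fun h => (hγ p hp).2 q hq hpq.symm ⟨e, h⟩

theorem exists_isProperOn_univ [Finite ι] (hm : Function.Involutive m)
    (hmid : Function.Injective mid) (hen : Function.Injective (fun h : ι × Bool => en h.1 h.2))
    (hme : ∀ p q b, mid p ≠ en q b) (hne : ∀ p b, m (mid p) ≠ en p b) :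
    ∃ col, IsProperOn mid en m Set.univ col := by
  have := Fintype.ofFinite ι
  obtain ⟨col₀, h₀⟩ := exists_isProperOn_of_mid_paired hm hmid hen hme
  set s : Set ι := {p | ∃ q, m (mid p) = mid q} with hs
  have key : ∀ t : Finset ι, (∀ p ∈ t, p ∉ s) → ∃ col, IsProperOn mid en m (s ∪ t) col := by
    intro t
    induction t using Finset.strongInduction with
    | H t ih =>
      intro hst
      by_cases ht : ∀ p ∈ t, ∃ q ∈ t, ∃ b, m (mid q) = en p b
      · exact h₀.exists_union hm hen hme hne t hst (fun p hp => hp) ht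
      push Not at ht
      obtain ⟨p, hp, hpt⟩ := ht
      obtain ⟨col, hcol⟩ := ih (t.erase p) (erase_ssubset hp)
        fun q hq => hst q (mem_of_mem_erase hq)
      obtain ⟨col', hcol'⟩ := hcol.exists_insert hm hen hne (p := p) (by simp [hst p hp])
        (fun q _ e => hst p hp ⟨q, e⟩) (by
          rintro q (⟨r, hr⟩ | hq) b e
          · exact hme _ _ _ (hr.symm.trans e)
          · exact hpt q (mem_of_mem_erase hq) b e)
      refine ⟨col', ?_⟩
      convert hcol' using 1
      ext q
      by_cases hqp : q = p <;> simp [hqp, hp]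
  obtain ⟨col, h⟩ := key (univ.filter fun p => p ∉ s) (by simp)
  refine ⟨col, ?_⟩
  convert h using 1
  ext p
  simp [em]

end Coloring


/-- The partner of `v` in the matching `M`, or `v` itself if `v` is not covered. -/
noncomputable def mate {V : Type*} (M : Finset (Sym2 V)) (v : V) : V :=
  if h : ∃ u, s(v, u) ∈ M then h.choose else v

/-- The two ends of a 3-path. -/
def P3.en {V : Type*} (p : P3 V) (b : Bool) : V := if b then p.z else p.x

/-- The two edges of a 3-path, indexed by the end they contain. -/
def P3.hedge {V : Type*} (p : P3 V) (b : Bool) : Sym2 V := s(p.y, p.en b)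

/-- The end of a 3-path contained in its heaviest edge. -/
noncomputable def heavyEnd {V : Type*} (w : Sym2 V → ℝ) (p : P3 V) : Bool :=
  if w s(p.y, p.z) ≤ w s(p.x, p.y) then false else true

section Selected

variable {U : Type*} {w : Sym2 U → ℝ} {M : Finset (Sym2 U)} {p : P3 U} {b : Bool}

theorem mate_eq_of_mem (hM : IsMatching M) {u v : U} (h : s(u, v) ∈ M) : mate M u = v := by
  have e : ∃ v, s(u, v) ∈ M := ⟨v, h⟩
  rw [mate, dif_pos e]
  by_contra hne
  refine hM.2 _ e.choose_spec _ h (fun h' => hne ?_) u (by simp) (by simp)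
  exact Sym2.congr_right.1 h'

theorem mate_of_not_covered {v : U} (h : ¬ covered M v) : mate M v = v :=
  dif_neg fun ⟨u, hu⟩ => h ⟨_, hu, by simp⟩

theorem mem_of_covered (hM : IsMatching M) {v : U} (h : covered M v) : s(v, mate M v) ∈ M := by
  obtain ⟨e, he, hv⟩ := h
  obtain ⟨u, rfl⟩ := Sym2.mem_iff_exists.1 hv
  rwa [mate_eq_of_mem hM he]

theorem mate_involutive (hM : IsMatching M) : Function.Involutive (mate M) := fun v => by
  by_cases h : covered M v
  · exact mate_eq_of_mem hM (Sym2.eq_swap ▸ mem_of_covered hM h)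
  · rw [mate_of_not_covered h, mate_of_not_covered h]

theorem eq_or_eq_mate (hM : IsMatching M) {f : Sym2 U} (hf : f ∈ M) {u v : U} (hu : u ∈ f)
    (hv : v ∈ f) : v = u ∨ v = mate M u := by
  obtain ⟨x, rfl⟩ := Sym2.mem_iff_exists.1 hu
  rw [mate_eq_of_mem hM hf]
  simpa using hv

theorem mid_ne_en (p : P3 U) (b : Bool) : p.y ≠ p.en b := by
  cases b
  · exact p.hxy.symm
  · exact p.hyz

theorem en_injective (p : P3 U) : Function.Injective p.en := by
  intro b b' h
  have := p.hxz
  cases b <;> cases b' <;> simp_all [P3.en]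

theorem hedge_false : p.hedge false = s(p.x, p.y) := Sym2.eq_swap

theorem hedge_true : p.hedge true = s(p.y, p.z) := rfl

theorem hedge_injective (p : P3 U) : Function.Injective p.hedge :=
  fun _ _ h => en_injective p (Sym2.congr_right.1 h)

/-- The edges `e` and `f` conflict: they contain a common vertex or meet a common edge of `M`. -/
def Conflict (M : Finset (Sym2 U)) (e f : Sym2 U) : Prop :=
  ∃ u ∈ e, ∃ v ∈ f, v = u ∨ v = mate M u

theorem Conflict.symm (hM : IsMatching M) {e f : Sym2 U} (h : Conflict M e f) :
    Conflict M f e := by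
  obtain ⟨u, hu, v, hv, h⟩ := h
  refine ⟨v, hv, u, hu, h.imp Eq.symm fun h => ?_⟩
  rw [h, mate_involutive hM]

variable [DecidableEq U] {P : Finset (P3 U)}

/-- The 3-paths whose edges form `E_1`. -/
def selOne (M : Finset (Sym2 U)) (p : P3 U) : Prop := cls6 M p ∨ cls8 M p

/-- The half-edges `(p, b)` whose edges form `E_2`. -/
def selTwo (w : Sym2 U → ℝ) (M : Finset (Sym2 U)) (p : P3 U) (b : Bool) : Prop :=
  (cls2 M p ∧ b = if covered M p.x then false else true) ∨ (cls3 M p ∧ b = heavyEnd w p) ∨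
    (cls4 M p ∧ b = heavyEnd w p) ∨ (cls7 M p ∧ b = if s(p.x, p.y) ∈ M then true else false)

/-- The half-edges `(p, b)` whose edges form `E_3`. -/
def selThree (M : Finset (Sym2 U)) (p : P3 U) (b : Bool) : Prop :=
  cls5 M p ∧ b = if s(p.x, p.y) ∈ M then true else false

/-- The half-edges `(p, b)` whose edges form `E_1 ∪ E_2 ∪ E_3`. -/
def selAny (w : Sym2 U → ℝ) (M : Finset (Sym2 U)) (p : P3 U) (b : Bool) : Prop :=
  selOne M p ∨ selTwo w M p b ∨ selThree M p b

theorem kcnt_eq (M : Finset (Sym2 U)) (p : P3 U) :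
    kcnt M p = (if covered M p.x then 1 else 0) + (if covered M p.y then 1 else 0) +
      (if covered M p.z then 1 else 0) := by
  rw [kcnt, Finset.card_filter, P3.verts, sum_insert, sum_insert, sum_singleton, add_assoc]
  · simpa using p.hyz
  · simpa using ⟨p.hxy, p.hxz⟩

theorem selAny_spec (h : selAny w M p b) :
    p.hedge b ∉ M ∧ (covered M p.y ∨ covered M (p.en b)) := by
  have hxy : s(p.x, p.y) ∈ M → covered M p.x ∧ covered M p.y :=
    fun h => ⟨⟨_, h, by simp⟩, ⟨_, h, by simp⟩⟩
  have hyz : s(p.y, p.z) ∈ M → covered M p.y ∧ covered M p.z :=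
    fun h => ⟨⟨_, h, by simp⟩, ⟨_, h, by simp⟩⟩
  have hs : s(p.y, p.x) = s(p.x, p.y) := Sym2.eq_swap
  cases b <;>
  simp only [selAny, selOne, selTwo, selThree, cls2, cls3, cls4, cls5, cls6, cls7, cls8, exOne,
    kcnt_eq, P3.hedge, P3.en] at h ⊢ <;> grind

theorem not_selAny_not (h : selTwo w M p b ∨ selThree M p b) : ¬ selAny w M p (!b) := by
  cases b <;>
  simp only [selAny, selOne, selTwo, selThree, cls2, cls3, cls4, cls5, cls6, cls7, cls8, exOne]
    at h ⊢ <;> grind (splits := 20)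

theorem not_selThree_of_selTwo (h : selTwo w M p b) : ¬ selThree M p b := by
  simp only [selTwo, selThree, cls2, cls3, cls4, cls5, cls7] at h ⊢
  grind

theorem selTwo_spec (hM : IsMatching M) (h : selTwo w M p b) :
    mate M p.y ∈ p.verts ∨ mate M (p.en b) ∈ p.verts := by
  have hxy : s(p.x, p.y) ∈ M → mate M p.y = p.x := fun h => mate_eq_of_mem hM (Sym2.eq_swap ▸ h)
  have hyz : s(p.y, p.z) ∈ M → mate M p.y = p.z := mate_eq_of_mem hM
  have hx := mate_of_not_covered (M := M) (v := p.x)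
  have hy := mate_of_not_covered (M := M) (v := p.y)
  have hz := mate_of_not_covered (M := M) (v := p.z)
  cases b <;>
  simp only [selTwo, cls2, cls3, cls4, cls7, exOne, kcnt_eq, P3.en, P3.verts, mem_insert,
    mem_singleton] at h ⊢ <;> grind

theorem selThree_spec (hM : IsMatching M) (h : selThree M p b) :
    mate M p.y ∈ p.verts ∧ mate M (p.en b) ∈ p.verts := by
  have hxy : s(p.x, p.y) ∈ M → mate M p.y = p.x ∧ covered M p.x ∧ covered M p.y :=
    fun h => ⟨mate_eq_of_mem hM (Sym2.eq_swap ▸ h), ⟨_, h, by simp⟩, ⟨_, h, by simp⟩⟩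
  have hyz : s(p.y, p.z) ∈ M → mate M p.y = p.z ∧ covered M p.y ∧ covered M p.z :=
    fun h => ⟨mate_eq_of_mem hM h, ⟨_, h, by simp⟩, ⟨_, h, by simp⟩⟩
  have hx := mate_of_not_covered (M := M) (v := p.x)
  have hz := mate_of_not_covered (M := M) (v := p.z)
  cases b <;>
  simp only [selThree, cls5, exOne, kcnt_eq, P3.en, P3.verts, mem_insert,
    mem_singleton] at h ⊢ <;> grind

theorem goodEdge_of_selAny (h : selAny w M p b) : goodEdge M (p.hedge b) := by
  obtain ⟨hn, hc⟩ := selAny_spec h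
  by_cases hy : covered M p.y <;> by_cases he : covered M (p.en b)
  · refine Or.inl ⟨p.y, p.en b, rfl, hy, he, fun f hf ⟨hu, hv⟩ => ?_⟩
    rw [(Sym2.mem_and_mem_iff (mid_ne_en p b)).1 ⟨hu, hv⟩] at hf
    exact hn hf
  · exact Or.inr ⟨p.y, p.en b, rfl, hy, he⟩
  · exact Or.inr ⟨p.en b, p.y, Sym2.eq_swap, he, hy⟩
  · exact (hc.elim hy he).elim

theorem mem_verts_of_mem_hedge {v : U} (hv : v ∈ p.hedge b) : v ∈ p.verts := by
  cases b <;> simp only [P3.hedge, P3.en, Sym2.mem_iff, P3.verts, mem_insert, mem_singleton] at * <;>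
    grind

theorem en_mem_verts (p : P3 U) (b : Bool) : p.en b ∈ p.verts := by
  cases b <;> simp [P3.en, P3.verts]

theorem mid_mem_verts (p : P3 U) : p.y ∈ p.verts := by
  simp [P3.verts]

theorem ne_of_selTwo_or_selThree {q : P3 U} {b' : Bool} (h : selTwo w M p b ∨ selThree M p b)
    (hq : selAny w M q b') (hne : (q, b') ≠ (p, b)) : q ≠ p := by
  rintro rfl
  have hb : b' = !b := by
    cases b <;> cases b' <;> simp_all
  exact not_selAny_not h (hb ▸ hq)

theorem Esub_union_eq_image :
    Esub (psel P (cls6 M)) ∪ Esub (psel P (cls8 M)) =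
      ((P ×ˢ (univ : Finset Bool)).filter fun h => selOne M h.1).image
        fun h => h.1.hedge h.2 := by
  ext e
  simp only [Esub, psel, mem_union, mem_biUnion, mem_filter, mem_image, Prod.exists,
    Bool.exists_bool, hedge_false, hedge_true, P3.edges, mem_insert, mem_singleton, selOne]
  grind

theorem X_union_eq_image :
    X2 P M ∪ X3 w P M ∪ X4 w P M ∪ X7 P M =
      ((P ×ˢ (univ : Finset Bool)).filter fun h => selTwo w M h.1 h.2).image
        fun h => h.1.hedge h.2 := by
  ext e
  simp only [X2, X3, X4, X7, psel, mem_union, mem_filter, mem_image, Prod.exists,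
    Bool.exists_bool, hedge_false, hedge_true, selTwo, heavy, heavyEnd]
  grind

theorem X5_eq_image :
    X5 P M = ((P ×ˢ (univ : Finset Bool)).filter fun h => selThree M h.1 h.2).image
      fun h => h.1.hedge h.2 := by
  ext e
  simp only [X5, psel, mem_filter, mem_image, Prod.exists,
    Bool.exists_bool, hedge_false, hedge_true, selThree]
  grind

variable [Fintype U]

theorem eq_of_mem_verts (hP : IsPacking P) {p q : P3 U} (hp : p ∈ P) (hq : q ∈ P) {v : U}
    (hvp : v ∈ p.verts) (hvq : v ∈ q.verts) : p = q := by
  by_contra hne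
  exact disjoint_left.1 (hP.2.1 p hp q hq hne) hvp hvq

theorem hedge_injOn (hP : IsPacking P) :
    Set.InjOn (fun h : P3 U × Bool => h.1.hedge h.2) {h | h.1 ∈ P} := by
  rintro ⟨p, b⟩ (hp : p ∈ P) ⟨q, b'⟩ (hq : q ∈ P) (h : p.hedge b = q.hedge b')
  have hv : p.y ∈ p.hedge b := Sym2.mem_mk_left _ _
  obtain rfl := eq_of_mem_verts hP hp hq (mem_verts_of_mem_hedge hv)
    (mem_verts_of_mem_hedge (b := b') (h ▸ hv))
  rw [hedge_injective p h]

/-- An edge of `E_2` can conflict with other selected edges at one vertex only. -/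
theorem exists_conflict_vertex (hM : IsMatching M) (hP : IsPacking P) (hp : p ∈ P)
    (h : selTwo w M p b) : ∃ o : U, ∀ q ∈ P, ∀ b', selAny w M q b' → (q, b') ≠ (p, b) →
      Conflict M (p.hedge b) (q.hedge b') → o ∈ q.hedge b' := by
  suffices H : ∀ l o : U, p.hedge b = s(l, o) → mate M l ∈ p.verts → ∃ o : U, ∀ q ∈ P, ∀ b',
      selAny w M q b' → (q, b') ≠ (p, b) → Conflict M (p.hedge b) (q.hedge b') →
        o ∈ q.hedge b' by
    rcases selTwo_spec hM h with h | h
    · exact H _ _ rfl h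
    · exact H _ _ Sym2.eq_swap h
  intro l o hlo hl
  refine ⟨mate M o, fun q hq b' hqb hne ⟨u, hu, v, hv, huv⟩ => ?_⟩
  have hqp := ne_of_selTwo_or_selThree (Or.inl h) hqb hne
  have hvp : v ∉ p.verts := fun h' =>
    hqp (eq_of_mem_verts hP hq hp (mem_verts_of_mem_hedge hv) h')
  rcases huv with rfl | rfl
  · exact (hvp (mem_verts_of_mem_hedge hu)).elim
  · rw [hlo, Sym2.mem_iff] at hu
    rcases hu with rfl | rfl
    · exact (hvp hl).elim
    · exact hv

/-- An edge of `E_3` does not conflict with any other selected edge. -/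
theorem not_conflict_of_selThree (hM : IsMatching M) (hP : IsPacking P) (hp : p ∈ P)
    (h : selThree M p b) {q : P3 U} (hq : q ∈ P) {b' : Bool} (hqb : selAny w M q b')
    (hne : (q, b') ≠ (p, b)) : ¬ Conflict M (p.hedge b) (q.hedge b') := by
  rintro ⟨u, hu, v, hv, huv⟩
  have hqp := ne_of_selTwo_or_selThree (Or.inr h) hqb hne
  have hvp : v ∉ p.verts := fun h' =>
    hqp (eq_of_mem_verts hP hq hp (mem_verts_of_mem_hedge hv) h')
  obtain ⟨h1, h2⟩ := selThree_spec hM h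
  rcases huv with rfl | rfl
  · exact hvp (mem_verts_of_mem_hedge hu)
  · rw [P3.hedge, Sym2.mem_iff] at hu
    rcases hu with rfl | rfl
    · exact hvp h1
    · exact hvp h2

/-- The edges of `E_1` can be coloured with four colours. -/
theorem exists_coloring_selOne (hM : IsMatching M) (hP : IsPacking P) :
    ∃ col : P3 U → Bool → Bool × Bool, ∀ p ∈ P, selOne M p → ∀ q ∈ P, selOne M q → ∀ b b',
      (q, b') ≠ (p, b) → Conflict M (p.hedge b) (q.hedge b') → col p b ≠ col q b' := by
  let ι := {p // p ∈ P ∧ selOne M p}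
  have : Finite ι := Finite.of_injective (fun p : ι => (⟨p.1, p.2.1⟩ : P))
    fun p q h => Subtype.ext (congrArg (fun r : P => r.1) h)
  obtain ⟨col, h1, h2, h3, h4⟩ := exists_isProperOn_univ (ι := ι) (mid := fun p => p.1.y)
    (en := fun p => p.1.en) (mate_involutive hM)
    (fun p q h => Subtype.ext (eq_of_mem_verts hP p.2.1 q.2.1 (mid_mem_verts p.1)
      ((show p.1.y = q.1.y from h) ▸ mid_mem_verts q.1)))
    (by
      rintro ⟨p, b⟩ ⟨q, b'⟩ h
      have h : p.1.en b = q.1.en b' := h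
      obtain rfl : p = q := Subtype.ext (eq_of_mem_verts hP p.2.1 q.2.1 (en_mem_verts p.1 b)
        (h ▸ en_mem_verts q.1 b'))
      rw [en_injective _ h])
    (by
      intro p q b h
      obtain rfl : p = q := Subtype.ext (eq_of_mem_verts hP p.2.1 q.2.1 (mid_mem_verts p.1)
        ((show p.1.y = q.1.en b from h) ▸ en_mem_verts q.1 b))
      exact mid_ne_en _ _ h)
    (by
      intro p b h
      have hy : covered M p.1.y := by
        by_contra hy
        rw [mate_of_not_covered hy] at h
        exact mid_ne_en _ _ h
      refine (selAny_spec (w := fun _ => 0) (b := b) (Or.inl p.2.2)).1 ?_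
      have := mem_of_covered hM hy
      rwa [h] at this)
  have hb : ∀ p : ι, ∀ b b', b ≠ b' → col p b ≠ col p b' := fun p b b' hbb => by
    have := h1 p trivial
    cases b <;> cases b' <;> simp_all [Ne.symm]
  refine ⟨fun p b => if h : p ∈ P ∧ selOne M p then col ⟨p, h⟩ b else default,
    fun p hp hps q hq hqs b b' hne ⟨u, hu, v, hv, huv⟩ => ?_⟩
  beta_reduce
  rw [dif_pos ⟨hp, hps⟩, dif_pos ⟨hq, hqs⟩]
  by_cases hpq : p = q
  · subst hpq
    exact hb _ b b' fun e => hne (e ▸ rfl)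
  have hpq' : (⟨p, hp, hps⟩ : ι) ≠ ⟨q, hq, hqs⟩ := fun e => hpq (congrArg (fun r : ι => r.1) e)
  rcases huv with rfl | rfl
  · exact (hpq (eq_of_mem_verts hP hp hq (mem_verts_of_mem_hedge hu)
      (mem_verts_of_mem_hedge hv))).elim
  rw [P3.hedge, Sym2.mem_iff] at hu hv
  rcases hu with rfl | rfl <;> rcases hv with hv | hv
  · exact h2 _ trivial _ trivial hpq' hv b b'
  · exact h3 _ trivial _ trivial b' hv b
  · refine (h3 _ trivial _ trivial b ?_ b').symm
    exact (congrArg (mate M) hv).symm.trans (mate_involutive hM _)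
  · exact h4 _ trivial _ trivial hpq' b b' hv

/-- The selected edges can be given colour sets, disjoint for conflicting edges, consisting of
one, two and four out of four colours for edges of `E_1`, `E_2` and `E_3`, respectively. -/
theorem exists_color_sets (w : Sym2 U → ℝ) (hM : IsMatching M) (hP : IsPacking P) :
    ∃ S : P3 U → Bool → Finset (Bool × Bool),
      (∀ p ∈ P, ∀ b, selAny w M p b → ∀ q ∈ P, ∀ b', selAny w M q b' → (q, b') ≠ (p, b) →
        Conflict M (p.hedge b) (q.hedge b') → Disjoint (S p b) (S q b')) ∧
      ∀ p b, (selOne M p → (S p b).card = 1) ∧ (selTwo w M p b → (S p b).card = 2) ∧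
        (selThree M p b → (S p b).card = 4) := by
  obtain ⟨col, hcol⟩ := exists_coloring_selOne hM hP
  have hone : ∀ {p : P3 U} {b : Bool}, selOne M p → ¬ selTwo w M p b ∧ ¬ selThree M p b :=
    fun h => ⟨fun h' => not_selAny_not (Or.inl h') (Or.inl h),
      fun h' => not_selAny_not (w := w) (Or.inr h') (Or.inl h)⟩
  let C := {s : Finset (Bool × Bool) // s.card = 2}
  have hpair : ∀ x y : Bool × Bool, ∃ c : C, x ∉ c.1 ∧ y ∉ c.1 := by
    have : ∀ x y : Bool × Bool, ∃ c : Finset (Bool × Bool), c.card = 2 ∧ x ∉ c ∧ y ∉ c := by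
      decide
    intro x y
    obtain ⟨c, hc, h⟩ := this x y
    exact ⟨⟨c, hc⟩, h⟩
  have : Nonempty C := ⟨(hpair default default).choose⟩
  obtain ⟨f, hf⟩ := exists_greedy_coloring (C := C)
    ((P ×ˢ (univ : Finset Bool)).filter fun h => selTwo w M h.1 h.2)
    (fun h c => ∀ q ∈ P, ∀ b, selOne M q → Conflict M (h.1.hedge h.2) (q.hedge b) →
      col q b ∉ c.1)
    (fun h h' c c' => Conflict M (h.1.hedge h.2) (h'.1.hedge h'.2) ∧ ¬ Disjoint c.1 c'.1)
    (fun h h' c c' H => ⟨H.1.symm hM, fun d => H.2 d.symm⟩) (by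
      rintro ⟨p, b⟩ hp f
      simp only [mem_filter, mem_product, mem_univ, and_true] at hp ⊢
      obtain ⟨o, ho⟩ := exists_conflict_vertex hM hP hp.1 hp.2
      have hov : ∀ q ∈ P, ∀ b', selAny w M q b' → (q, b') ≠ (p, b) →
          Conflict M (p.hedge b) (q.hedge b') → o ∈ q.verts := fun q hq b' h hne hc =>
        mem_verts_of_mem_hedge (ho q hq b' h hne hc)
      have hne : ∀ {q : P3 U} {b'}, selOne M q → (q, b') ≠ (p, b) := fun h e => by
        rw [(Prod.mk.inj e).1] at h
        exact (hone h).1 hp.2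
      by_cases e1 : ∃ q ∈ P, o ∈ q.verts ∧ selOne M q
      · obtain ⟨q, hq, hoq, hqs⟩ := e1
        obtain ⟨c, hc⟩ := hpair (col q false) (col q true)
        refine ⟨c, fun r hr b' hrs hconf => ?_, fun h hh hhne hbad => ?_⟩
        · obtain rfl := eq_of_mem_verts hP hr hq (hov r hr b' (Or.inl hrs) (hne hrs) hconf) hoq
          cases b'
          · exact hc.1
          · exact hc.2
        · have := eq_of_mem_verts hP hh.1 hq
            (hov h.1 hh.1 h.2 (Or.inr (Or.inl hh.2)) hhne hbad.1) hoq
          exact (hone (this ▸ hqs)).1 hh.2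
      by_cases e2 : ∃ q ∈ P, o ∈ q.verts ∧ ∃ b', selTwo w M q b'
      · obtain ⟨q, hq, hoq, b', hqs⟩ := e2
        have hcc : ∀ c : C, ∃ c' : C, Disjoint c'.1 c.1 := fun ⟨c, hc⟩ =>
          ⟨⟨cᶜ, by rw [card_compl, hc]; rfl⟩, disjoint_compl_left⟩
        obtain ⟨c, hc⟩ := hcc (f (q, b'))
        refine ⟨c, fun r hr b' hrs hconf => ?_, fun h hh hhne hbad => ?_⟩
        · exact (e1 ⟨r, hr, hov r hr b' (Or.inl hrs) (hne hrs) hconf, hrs⟩).elim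
        · obtain ⟨r, br⟩ := h
          obtain rfl := eq_of_mem_verts hP hh.1 hq
            (hov r hh.1 br (Or.inr (Or.inl hh.2)) hhne hbad.1) hoq
          by_cases hbr : b' = br
          · exact hbad.2 (hbr ▸ hc)
          · have : b' = !br := Bool.eq_not.2 hbr
            exact not_selAny_not (Or.inl hh.2) (this ▸ Or.inr (Or.inl hqs))
      · refine ⟨Classical.arbitrary C, fun r hr b' hrs hconf => ?_, fun h hh hhne hbad => ?_⟩
        · exact (e1 ⟨r, hr, hov r hr b' (Or.inl hrs) (hne hrs) hconf, hrs⟩).elim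
        · exact (e2 ⟨h.1, hh.1, hov h.1 hh.1 h.2 (Or.inr (Or.inl hh.2)) hhne hbad.1, h.2,
            hh.2⟩).elim)
  simp only [mem_filter, mem_product, mem_univ, and_true] at hf
  let S : P3 U → Bool → Finset (Bool × Bool) := fun p b =>
    if selOne M p then {col p b} else if selTwo w M p b then (f (p, b)).1 else univ
  have S1 : ∀ p b, selOne M p → S p b = {col p b} := fun p b h => if_pos h
  have S2 : ∀ p b, selTwo w M p b → S p b = (f (p, b)).1 := fun p b h => by
    have : ¬ selOne M p := fun h' => (hone h').1 h
    simp [S, this, h]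
  have S3 : ∀ p b, selThree M p b → S p b = univ := fun p b h => by
    have h1 : ¬ selOne M p := fun h' => (hone h').2 h
    have h2 : ¬ selTwo w M p b := fun h' => not_selThree_of_selTwo h' h
    simp [S, h1, h2]
  refine ⟨S, fun p hp b hpb q hq b' hqb hne hconf => ?_, fun p b => ⟨fun h => ?_, fun h => ?_,
    fun h => ?_⟩⟩
  · rcases hpb with h | h | h
    · rcases hqb with h' | h' | h'
      · rw [S1 p b h, S1 q b' h', disjoint_singleton]
        exact hcol p hp h q hq h' b b' hne hconf
      · rw [S1 p b h, S2 q b' h', disjoint_singleton_left]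
        exact (hf (q, b') ⟨hq, h'⟩).1 p hp b h (hconf.symm hM)
      · exact (not_conflict_of_selThree (w := w) hM hP hq h' hp (Or.inl h) hne.symm
          (hconf.symm hM)).elim
    · rcases hqb with h' | h' | h'
      · rw [S2 p b h, S1 q b' h', disjoint_singleton_right]
        exact (hf (p, b) ⟨hp, h⟩).1 q hq b' h' hconf
      · rw [S2 p b h, S2 q b' h']
        by_contra hd
        exact (hf (p, b) ⟨hp, h⟩).2 (q, b') ⟨hq, h'⟩ hne ⟨hconf, hd⟩
      · exact (not_conflict_of_selThree (w := w) hM hP hq h' hp (Or.inr (Or.inl h)) hne.symm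
          (hconf.symm hM)).elim
    · exact (not_conflict_of_selThree hM hP hp h hq hqb hne hconf).elim
  · rw [S1 p b h, card_singleton]
  · rw [S2 p b h]; exact (f (p, b)).2
  · rw [S3 p b h]; rfl

/-- The total cost of the edges of a set of half-edges. -/
theorem cw_image_hedge (hP : IsPacking P) (c : P3 U × Bool → Prop) [DecidablePred c] :
    cw w M (((P ×ˢ (univ : Finset Bool)).filter c).image fun h => h.1.hedge h.2) =
      ∑ h ∈ P ×ˢ (univ : Finset Bool), if c h then cost w M (h.1.hedge h.2) else 0 := by
  rw [cw, sum_image, sum_filter]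
  exact (hedge_injOn hP).mono fun h hh => by simp_all

end Selected

theorem statement_13 (n : ℕ) (hn : Fintype.card V = n) (h3 : 3 ∣ n)
    (w : Sym2 V → ℝ) (hw : ∀ e : Sym2 V, 0 ≤ w e)
    (M : Finset (Sym2 V)) (hM : IsMaxMatchingOfSize w (n / 3) M)
    (Pstar : Finset (P3 V)) (hP : IsMaxPacking w Pstar) (hAss : Ass Pstar M) :
    ∃ N : Finset (Sym2 V), (∀ e ∈ N, goodEdge M e) ∧
      (∀ f ∈ M, ∀ e₁ ∈ N, ∀ e₂ ∈ N, shares f e₁ → shares f e₂ → e₁ = e₂) ∧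
      (∀ e₁ ∈ N, ∀ e₂ ∈ N, e₁ ≠ e₂ → ∀ v : V, v ∈ e₁ → v ∈ e₂ → covered M v) ∧
      (1 / 4 : ℝ) * cw w M (Esub (psel Pstar (cls6 M)) ∪ Esub (psel Pstar (cls8 M))) +
        (1 / 2 : ℝ) * cw w M (X2 Pstar M ∪ X3 w Pstar M ∪ X4 w Pstar M ∪ X7 Pstar M) +
        cw w M (X5 Pstar M) ≤ cw w M N := by

  obtain ⟨hM, -, -⟩ := hM
  obtain ⟨hP, -⟩ := hP
  obtain ⟨S, hS, hcard⟩ := exists_color_sets w hM hP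
  let N : Bool × Bool → Finset (Sym2 V) := fun k =>
    ((Pstar ×ˢ (univ : Finset Bool)).filter fun h =>
      (selAny w M h.1 h.2 ∧ k ∈ S h.1 h.2) ∧ 0 ≤ cost w M (h.1.hedge h.2)).image
        fun h => h.1.hedge h.2
  have hN : ∀ k, ∀ e ∈ N k, ∃ p ∈ Pstar, ∃ b, selAny w M p b ∧ k ∈ S p b ∧ p.hedge b = e := by
    intro k e he
    obtain ⟨⟨p, b⟩, hh, rfl⟩ := mem_image.1 he
    simp only [mem_filter, mem_product, mem_univ, and_true] at hh
    exact ⟨p, hh.1, b, hh.2.1.1, hh.2.1.2, rfl⟩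
  have hconf : ∀ k, ∀ e ∈ N k, ∀ f ∈ N k, Conflict M e f → e = f := by
    intro k e he f hf hef
    obtain ⟨p, hp, b, hpb, hk, rfl⟩ := hN k e he
    obtain ⟨q, hq, b', hqb, hk', rfl⟩ := hN k f hf
    by_contra hne
    refine disjoint_left.1 (hS p hp b hpb q hq b' hqb (fun e => hne ?_) hef) hk hk'
    obtain ⟨rfl, rfl⟩ := Prod.mk.inj e
    rfl
  obtain ⟨k, -, hk⟩ : ∃ k ∈ (univ : Finset (Bool × Bool)),
      (1 / 4 : ℝ) * cw w M (Esub (psel Pstar (cls6 M)) ∪ Esub (psel Pstar (cls8 M))) +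
        (1 / 2 : ℝ) * cw w M (X2 Pstar M ∪ X3 w Pstar M ∪ X4 w Pstar M ∪ X7 Pstar M) +
        cw w M (X5 Pstar M) ≤ cw w M (N k) := by
    refine exists_le_of_sum_le univ_nonempty ?_
    rw [Esub_union_eq_image, X_union_eq_image, X5_eq_image]
    simp only [N, cw_image_hedge hP]
    rw [sum_comm, sum_const, mul_sum, mul_sum, ← sum_add_distrib, ← sum_add_distrib, smul_sum]
    refine sum_le_sum fun h _ => ?_
    obtain ⟨p, b⟩ := h
    obtain ⟨h1, h2, h3⟩ := hcard p b
    have hcol : ∑ k : Bool × Bool, (if (selAny w M p b ∧ k ∈ S p b) ∧ 0 ≤ cost w M (p.hedge b)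
        then cost w M (p.hedge b) else 0) =
        if selAny w M p b then (S p b).card * max (cost w M (p.hedge b)) 0 else 0 := by
      by_cases ha : selAny w M p b
      · by_cases hc : 0 ≤ cost w M (p.hedge b)
        · simp [ha, hc]
        · simp [ha, hc, le_of_not_ge hc]
      · simp [ha]
    have hu : (univ : Finset (Bool × Bool)).card = 4 := rfl
    simp only at hcol ⊢
    rw [hcol, hu]
    have hle := le_max_left (cost w M (p.hedge b)) 0
    have e1 : selOne M p → ¬ selTwo w M p b ∧ ¬ selThree M p b :=
      fun h => ⟨fun h' => not_selAny_not (Or.inl h') (Or.inl h),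
        fun h' => not_selAny_not (w := w) (Or.inr h') (Or.inl h)⟩
    have e2 : selTwo w M p b → ¬ selThree M p b := not_selThree_of_selTwo
    by_cases s1 : selOne M p
    · simp only [s1, e1 s1, selAny, h1 s1, if_true, if_false, true_or]
      norm_num
      exact Or.inl (by linarith)
    by_cases s2 : selTwo w M p b
    · simp only [s1, s2, e2 s2, selAny, h2 s2, if_true, if_false, true_or, or_true]
      norm_num
      linarith
    by_cases s3 : selThree M p b
    · simp only [s1, s2, s3, selAny, h3 s3, if_true, if_false, or_true]
      norm_num
    · simp [s1, s2, s3, selAny]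
  refine ⟨N k, fun e he => ?_, fun f hf e₁ h₁ e₂ h₂ ⟨u, huf, hu⟩ ⟨v, hvf, hv⟩ =>
    hconf k e₁ h₁ e₂ h₂ ⟨u, hu, v, hv, eq_or_eq_mate hM hf huf hvf⟩,
    fun e₁ h₁ e₂ h₂ hne v hv hv' =>
      (hne (hconf k e₁ h₁ e₂ h₂ ⟨v, hv, v, hv', Or.inl rfl⟩)).elim, hk⟩
  obtain ⟨p, -, b, hpb, -, rfl⟩ := hN k e he
  exact goodEdge_of_selAny hpb

end MW3PP
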